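/- For every real α with 1 − 1/k₂ < α < 1 there exists a real number k > k₂ (in particular k > 3) such that g(k) < α < 1 − 1/k. -/

import Mathlib

noncomputable def g (k : ℝ) : ℝ :=
  1 - (Real.sqrt (2 * k ^ 3 - k ^ 2 - 2 * k + 1) - 3 * k + 3) / (k - 2) ^ 2

noncomputable def k₂ : ℝ :=
  3 / 2 + (5 / 8 + Real.sqrt (83 / 432)) ^ ((1 : ℝ) / 3)
    + (5 / 8 - Real.sqrt (83 / 432)) ^ ((1 : ℝ) / 3)

/-!
Clearing the square root, `g k < 1 - 1 / k` reduces, for `0 < k ≠ 2`, to the positivity of the cubic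
`2 * k ^ 3 - 9 * k ^ 2 + 10 * k - 4`, whose only real root is `k₂`. Hence the curve `g` lies below
`k ↦ 1 - 1 / k` to the right of `k₂`. The upper curve takes the value `α` at `1 / (1 - α)`, which is
to the right of `k₂`. So `g` is below `α` at this point and, by continuity, also slightly further to
the right, where the upper curve exceeds `α`.
-/

open Real

section Cardano

variable {p q : ℝ}

/-- Cardano's expression for a root of the depressed cubic `t ^ 3 = p * t + q`. Since `Real.rpow` is
the real cube root only on nonnegative bases, it is meaningful for `0 ≤ p`, `0 ≤ q` and
`(p / 3) ^ 3 ≤ (q / 2) ^ 2`. -/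
noncomputable def cardanoRoot (p q : ℝ) : ℝ :=
  (q / 2 + √((q / 2) ^ 2 - (p / 3) ^ 3)) ^ ((1 : ℝ) / 3)
    + (q / 2 - √((q / 2) ^ 2 - (p / 3) ^ 3)) ^ ((1 : ℝ) / 3)

lemma rpow_one_third_pow_three {x : ℝ} (hx : 0 ≤ x) : (x ^ ((1 : ℝ) / 3)) ^ 3 = x := by
  simpa using rpow_inv_natCast_pow hx three_ne_zero

lemma sqrt_cardano_le_half (hp : 0 ≤ p) (hq : 0 ≤ q) : √((q / 2) ^ 2 - (p / 3) ^ 3) ≤ q / 2 :=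
  sqrt_le_iff.2 ⟨by positivity, sub_le_self _ (by positivity)⟩

theorem cardanoRoot_pow_three (hp : 0 ≤ p) (hq : 0 ≤ q) (hpq : (p / 3) ^ 3 ≤ (q / 2) ^ 2) :
    cardanoRoot p q ^ 3 = p * cardanoRoot p q + q := by
  have hs_sq : √((q / 2) ^ 2 - (p / 3) ^ 3) ^ 2 = (q / 2) ^ 2 - (p / 3) ^ 3 :=
    sq_sqrt (sub_nonneg.2 hpq)
  have hs_le := sqrt_cardano_le_half hp hq
  unfold cardanoRoot
  set s := √((q / 2) ^ 2 - (p / 3) ^ 3)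
  have hadd : 0 ≤ q / 2 + s := by positivity
  have hsub : 0 ≤ q / 2 - s := sub_nonneg.2 hs_le
  have hu := rpow_one_third_pow_three hadd
  have hv := rpow_one_third_pow_three hsub
  set u := (q / 2 + s) ^ ((1 : ℝ) / 3)
  set v := (q / 2 - s) ^ ((1 : ℝ) / 3)
  have huv : u * v = p / 3 := by
    refine (pow_left_inj₀ (by positivity) (by positivity) three_ne_zero).1 ?_
    calc (u * v) ^ 3 = (q / 2 + s) * (q / 2 - s) := by rw [mul_pow, hu, hv]
      _ = (p / 3) ^ 3 := by linear_combination -hs_sq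
  calc (u + v) ^ 3 = 3 * (u * v) * (u + v) + (u ^ 3 + v ^ 3) := by ring
    _ = p * (u + v) + q := by rw [huv, hu, hv]; ring

end Cardano

lemma k₂_eq_add_cardanoRoot : k₂ = 3 / 2 + cardanoRoot (7 / 4) (5 / 4) := by
  norm_num [k₂, cardanoRoot, add_assoc]

lemma k₂_cubic_eq_zero : 2 * k₂ ^ 3 - 9 * k₂ ^ 2 + 10 * k₂ - 4 = 0 := by
  have ht : cardanoRoot (7 / 4) (5 / 4) ^ 3 = 7 / 4 * cardanoRoot (7 / 4) (5 / 4) + 5 / 4 :=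
    cardanoRoot_pow_three (by norm_num) (by norm_num) (by norm_num)
  rw [k₂_eq_add_cardanoRoot]
  linear_combination 2 * ht

lemma cubic_neg_of_le_three {k : ℝ} (hk : k ≤ 3) : 2 * k ^ 3 - 9 * k ^ 2 + 10 * k - 4 < 0 := by
  -- `7 / 10` approximates the abscissa `(9 - √21) / 6` of the cubic's local maximum.
  have hcubic : 2 * k ^ 3 - 9 * k ^ 2 + 10 * k - 4
      = -2 * ((3 - k) * (k - 7 / 10) ^ 2) - 1 / 5 * (k - 31 / 20) ^ 2 - 1159 / 2000 := by ring
  have hprod : 0 ≤ (3 - k) * (k - 7 / 10) ^ 2 := mul_nonneg (sub_nonneg.2 hk) (sq_nonneg _)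
  have hsq : 0 ≤ (k - 31 / 20) ^ 2 := sq_nonneg _
  rw [hcubic]
  linarith

lemma three_lt_k₂ : 3 < k₂ := by
  by_contra! hle
  exact (cubic_neg_of_le_three hle).ne k₂_cubic_eq_zero

lemma cubic_pos_iff_k₂_lt {k : ℝ} : 0 < 2 * k ^ 3 - 9 * k ^ 2 + 10 * k - 4 ↔ k₂ < k := by
  have h3 := three_lt_k₂
  rcases le_or_gt k 3 with hk | hk
  · exact iff_of_false (cubic_neg_of_le_three hk).not_gt (hk.trans h3.le).not_gt
  have hfactor : 2 * k ^ 3 - 9 * k ^ 2 + 10 * k - 4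
      = (2 * (k ^ 2 + k * k₂ + k₂ ^ 2) - 9 * (k + k₂) + 10) * (k - k₂) := by
    linear_combination k₂_cubic_eq_zero
  have hquad : 0 < 2 * (k ^ 2 + k * k₂ + k₂ ^ 2) - 9 * (k + k₂) + 10 := by
    nlinarith [mul_pos (sub_pos.2 hk) (sub_pos.2 h3)]
  rw [hfactor, mul_pos_iff_of_pos_left hquad, sub_pos]

lemma g_lt_iff_lt_sqrt {k : ℝ} (hk0 : k ≠ 0) (hk2 : k ≠ 2) :
    g k < 1 - 1 / k ↔ (4 * k ^ 2 - 7 * k + 4) / k < √(2 * k ^ 3 - k ^ 2 - 2 * k + 1) := by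
  have hsq : 0 < (k - 2) ^ 2 := sq_pos_of_ne_zero (sub_ne_zero.2 hk2)
  have hnum : 1 / k * (k - 2) ^ 2 = (4 * k ^ 2 - 7 * k + 4) / k - 3 * k + 3 := by
    field_simp
    ring
  rw [g, sub_lt_sub_iff_left, lt_div_iff₀ hsq, hnum, add_lt_add_iff_right, sub_lt_sub_iff_right]

lemma lt_sqrt_iff_cubic_pos {k : ℝ} (hk0 : 0 < k) (hk2 : k ≠ 2) :
    (4 * k ^ 2 - 7 * k + 4) / k < √(2 * k ^ 3 - k ^ 2 - 2 * k + 1)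
      ↔ 0 < 2 * k ^ 3 - 9 * k ^ 2 + 10 * k - 4 := by
  have hsq : 0 < (k - 2) ^ 2 := sq_pos_of_ne_zero (sub_ne_zero.2 hk2)
  have hnum : 0 ≤ 4 * k ^ 2 - 7 * k + 4 := by nlinarith [sq_nonneg (8 * k - 7)]
  have hdiff : (2 * k ^ 3 - k ^ 2 - 2 * k + 1) * k ^ 2 - (4 * k ^ 2 - 7 * k + 4) ^ 2
      = (k - 2) ^ 2 * (2 * k ^ 3 - 9 * k ^ 2 + 10 * k - 4) := by ring
  rw [lt_sqrt (by positivity), div_pow, div_lt_iff₀ (by positivity), ← sub_pos, hdiff,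
    mul_pos_iff_of_pos_left hsq]

theorem g_lt_one_sub_one_div_iff {k : ℝ} (hk0 : 0 < k) (hk2 : k ≠ 2) :
    g k < 1 - 1 / k ↔ k₂ < k := by
  rw [g_lt_iff_lt_sqrt hk0.ne' hk2, lt_sqrt_iff_cubic_pos hk0 hk2, cubic_pos_iff_k₂_lt]

lemma continuousAt_g {k : ℝ} (hk : k ≠ 2) : ContinuousAt g k := by
  have hsq : (k - 2) ^ 2 ≠ 0 := pow_ne_zero 2 (sub_ne_zero.2 hk)
  unfold g
  fun_prop (disch := assumption)

lemma one_sub_one_div_lt_iff {a k : ℝ} (hk : 0 < k) (ha : a < 1) :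
    1 - 1 / k < a ↔ k < 1 / (1 - a) := by
  rw [sub_lt_comm, lt_one_div (sub_pos.2 ha) hk]

lemma lt_one_sub_one_div_iff {a k : ℝ} (hk : 0 < k) (ha : a < 1) :
    a < 1 - 1 / k ↔ 1 / (1 - a) < k := by
  rw [lt_sub_comm, one_div_lt hk (sub_pos.2 ha)]

theorem stmt9 (α : ℝ) (h1 : 1 - 1 / k₂ < α) (h2 : α < 1) :
    ∃ k : ℝ, k₂ < k ∧ 3 < k ∧ g k < α ∧ α < 1 - 1 / k := by
  have h3 := three_lt_k₂
  have hk₂ : k₂ < 1 / (1 - α) := (one_sub_one_div_lt_iff (by linarith) h2).1 h1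
  have hne : 1 / (1 - α) ≠ 2 := by linarith
  have hg : g (1 / (1 - α)) < α := by
    simpa using (g_lt_one_sub_one_div_iff (by linarith) hne).2 hk₂
  obtain ⟨k, hk, hgk⟩ := ((continuousAt_g hne).eventually_lt_const hg).exists_gt
  have hk₂k : k₂ < k := hk₂.trans hk
  exact ⟨k, hk₂k, h3.trans hk₂k, hgk, (lt_one_sub_one_div_iff (by linarith) h2).2 hk⟩
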